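/- Let K ≥ 1 and let S : ℝ → ℝ^{K×K} be such that S(x) is invertible for each x. Fix a point (t,x,v) with v ∈ [0,1], and let (r̂_ε, ĵ_ε)_{ε ∈ (0,1]} be families of ℝ^K-valued functions, continuously differentiable in (t,x), satisfying at that point for every ε: ∂_t r̂_ε + v ∂_x ĵ_ε = −(1/ε²) S(x)(r̂_ε − ρ̂_ε) and ∂_t ĵ_ε + (v/ε²) ∂_x r̂_ε = −(1/ε²) S(x) ĵ_ε, where ρ̂_ε(t,x) = ∫_0^1 r̂_ε(t,x,v') dv'. Assume ‖∂_t r̂_ε + v ∂_x ĵ_ε‖ ≤ M and ‖∂_t ĵ_ε‖ ≤ M uniformly in ε at this point, and that r̂_ε → r̂, ρ̂_ε → ρ̂, ĵ_ε → ĵ, ∂_x r̂_ε → g as ε → 0. Then r̂ = ρ̂ and ĵ = −v S(x)^{-1} g. -/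

import Mathlib

open MeasureTheory intervalIntegral Matrix Filter Topology

/-!
Multiplying each equation by `ε²` turns it into `f ε = -ε² • u ε`, where `u ε` is the bounded
quantity (`∂_t r̂ + v ∂_x ĵ`, respectively `∂_t ĵ`) and `f ε` is `S (r̂ - ρ̂)`, respectively
`S ĵ + v ∂_x r̂`. Hence `f ε → 0` (`limit_eq_zero_of_stiff`). By continuity of `S(x)` acting on
vectors, `S (r̂ - ρ̂) = 0` and `S ĵ + v g = 0` in the limit, and invertibility of `S(x)` concludes.
-/

/-- A term multiplied by the stiff factor `1 / ε²` whose product stays bounded has limit zero. -/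
lemma limit_eq_zero_of_stiff {E : Type*} [NormedAddCommGroup E] [NormedSpace ℝ E]
    {u f : ℝ → E} {a : E} {M : ℝ}
    (hu : ∀ ε ∈ Set.Ioc (0 : ℝ) 1, ‖u ε‖ ≤ M)
    (huf : ∀ ε ∈ Set.Ioc (0 : ℝ) 1, u ε = -((1 / ε ^ 2) • f ε))
    (hf : Tendsto f (𝓝[>] 0) (𝓝 a)) : a = 0 := by
  refine tendsto_nhds_unique hf ?_
  have hε : Tendsto (fun ε : ℝ => ε ^ 2 * M) (𝓝[>] 0) (𝓝 0) := by
    have hc : Continuous fun ε : ℝ => ε ^ 2 * M := by fun_prop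
    simpa using (hc.tendsto 0).mono_left nhdsWithin_le_nhds
  refine squeeze_zero_norm' ?_ hε
  filter_upwards [Ioc_mem_nhdsGT (zero_lt_one' ℝ)] with ε hmem
  have hpos : (0 : ℝ) < ε ^ 2 := pow_pos hmem.1 2
  have hfu : f ε = -(ε ^ 2 • u ε) := by
    rw [huf ε hmem, smul_neg, neg_neg, smul_smul, mul_one_div_cancel hpos.ne', one_smul]
  rw [hfu, norm_neg, norm_smul, Real.norm_of_nonneg hpos.le]
  exact mul_le_mul_of_nonneg_left (hu ε hmem) hpos.le

/-- Rigorous pointwise form of the formal diffusion limit of the vectorized (stochastic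
Galerkin) even-odd transport system: under uniform boundedness of `∂_t r̂_ε + v ∂_x ĵ_ε`
and `∂_t ĵ_ε`, the limits satisfy `r̂ = ρ̂` and `ĵ = −v S(x)⁻¹ g`. -/
theorem gPC_transport_even_odd_pointwise_limit
    (K : ℕ) (hK : 1 ≤ K)
    (S : ℝ → Matrix (Fin K) (Fin K) ℝ) (hS : ∀ y, IsUnit (S y))
    (t x v : ℝ) (hv : v ∈ Set.Icc (0 : ℝ) 1)
    (r j rt rx jt jx : ℝ → ℝ → ℝ → ℝ → Fin K → ℝ)  -- arguments: ε, t, x, v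
    (hrt : ∀ ε ∈ Set.Ioc (0 : ℝ) 1, HasDerivAt (fun s => r ε s x v) (rt ε t x v) t)
    (hrx : ∀ ε ∈ Set.Ioc (0 : ℝ) 1, HasDerivAt (fun y => r ε t y v) (rx ε t x v) x)
    (hjt : ∀ ε ∈ Set.Ioc (0 : ℝ) 1, HasDerivAt (fun s => j ε s x v) (jt ε t x v) t)
    (hjx : ∀ ε ∈ Set.Ioc (0 : ℝ) 1, HasDerivAt (fun y => j ε t y v) (jx ε t x v) x)
    (hpde1 : ∀ ε ∈ Set.Ioc (0 : ℝ) 1,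
      rt ε t x v + v • jx ε t x v =
        -((1 / ε ^ 2) •
          (S x).mulVec (r ε t x v - fun i => ∫ v' in (0 : ℝ)..1, r ε t x v' i)))
    (hpde2 : ∀ ε ∈ Set.Ioc (0 : ℝ) 1,
      jt ε t x v + (v / ε ^ 2) • rx ε t x v = -((1 / ε ^ 2) • (S x).mulVec (j ε t x v)))
    (M : ℝ)
    (hbd1 : ∀ ε ∈ Set.Ioc (0 : ℝ) 1, ‖rt ε t x v + v • jx ε t x v‖ ≤ M)
    (hbd2 : ∀ ε ∈ Set.Ioc (0 : ℝ) 1, ‖jt ε t x v‖ ≤ M)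
    (rlim ρlim jlim g : Fin K → ℝ)
    (hrlim : Tendsto (fun ε => r ε t x v) (𝓝[>] 0) (𝓝 rlim))
    (hρlim : Tendsto (fun ε => fun i => ∫ v' in (0 : ℝ)..1, r ε t x v' i)
      (𝓝[>] 0) (𝓝 ρlim))
    (hjlim : Tendsto (fun ε => j ε t x v) (𝓝[>] 0) (𝓝 jlim))
    (hglim : Tendsto (fun ε => rx ε t x v) (𝓝[>] 0) (𝓝 g)) :
    rlim = ρlim ∧ jlim = -(v • (S x)⁻¹.mulVec g) := by
  have hdet : IsUnit (S x).det := (Matrix.isUnit_iff_isUnit_det _).1 (hS x)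
  have hcont : Continuous fun w : Fin K → ℝ => (S x).mulVec w := by fun_prop
  constructor
  · have h0 : (S x).mulVec (rlim - ρlim) = 0 :=
      limit_eq_zero_of_stiff hbd1 hpde1 ((hcont.tendsto _).comp (hrlim.sub hρlim))
    have hinj := Matrix.mulVec_injective_of_isUnit (hS x)
    exact sub_eq_zero.1 (hinj (h0.trans (Matrix.mulVec_zero _).symm))
  · have h0 : (S x).mulVec jlim + v • g = 0 := by
      refine limit_eq_zero_of_stiff hbd2 (f := fun ε => (S x).mulVec (j ε t x v) + v • rx ε t x v)
        (fun ε hε => ?_) (((hcont.tendsto _).comp hjlim).add (hglim.const_smul v))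
      rw [eq_sub_of_add_eq (hpde2 ε hε), smul_add, smul_smul, neg_add, sub_eq_add_neg,
        one_div_mul_eq_div]
    have h1 : jlim = (S x)⁻¹.mulVec ((S x).mulVec jlim) := by
      rw [Matrix.mulVec_mulVec, Matrix.nonsing_inv_mul _ hdet, Matrix.one_mulVec]
    rw [h1, eq_neg_of_add_eq_zero_left h0, Matrix.mulVec_neg, Matrix.mulVec_smul]
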